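/- For every t ∈ (0,T) and every bounded Borel measurable function f : ℝ^ν → ℝ one has E[f(b_t)] = ∫_{ℝ^ν} (p_t(x,z) p_{T−t}(z,y) / p_T(x,y)) f(z) dz; in particular, the law of b_t is absolutely continuous with respect to Lebesgue measure with density z ↦ p_t(x,z) p_{T−t}(z,y)/p_T(x,y). -/

import Mathlib

open MeasureTheory ProbabilityTheory

/-- A `ν`-dimensional Brownian motion `B` on a filtered probability space
`(Ω, m, (ℱ_t), P)` satisfying the usual conditions: the filtration is complete and
right-continuous, `B` has continuous paths on `[0,∞)` with `B_0 = 0`, `B` is adapted, and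
for `0 ≤ s ≤ t` the increment `B_t − B_s` is independent of `ℱ_s` and is a centered
Gaussian vector with covariance matrix `(t−s)·Id` (componentwise iid `N(0, t−s)`). -/
structure IsBrownianMotion {Ω : Type*} [m : MeasurableSpace Ω] (P : Measure Ω) (ν : ℕ)
    (F : Filtration ℝ m) (B : ℝ → Ω → Fin ν → ℝ) : Prop where
  complete : ∀ (t : ℝ) (A : Set Ω), P A = 0 → MeasurableSet[F t] A
  rightCont : ∀ t : ℝ, (F t : MeasurableSpace Ω) = ⨅ s ∈ Set.Ioi t, (F s : MeasurableSpace Ω)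
  contPaths : ∀ ω : Ω, ContinuousOn (fun t => B t ω) (Set.Ici 0)
  start : ∀ ω : Ω, B 0 ω = 0
  adapted : ∀ t : ℝ, Measurable[F t] (B t)
  indepIncr : ∀ s t : ℝ, 0 ≤ s → s ≤ t →
    Indep (MeasurableSpace.comap (fun ω => B t ω - B s ω) inferInstance) (F s) P
  gaussIncr : ∀ s t : ℝ, 0 ≤ s → s ≤ t →
    Measure.map (fun ω => B t ω - B s ω) P =
      Measure.pi fun _ : Fin ν => gaussianReal 0 (Real.toNNReal (t - s))

/-- The Brownian bridge from `q` to `y` in time `T` driven by the path `B`: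
`b_t = (t/T)y + ((T−t)/T)q + B_t − (T−t)∫₀ᵗ (T−s)⁻² B_s ds` for `t < T`, and `b_t = y`
otherwise (in particular `b_T = y`). -/
noncomputable def bridgeBB (ν : ℕ) (T : ℝ) (q y : Fin ν → ℝ) (B : ℝ → Fin ν → ℝ)
    (t : ℝ) : Fin ν → ℝ :=
  if t < T then
    (t / T) • y + ((T - t) / T) • q + B t -
      (T - t) • ∫ s in (0 : ℝ)..t, ((T - s) ^ 2)⁻¹ • B s
  else y

/-- The `ν`-dimensional Gaussian heat kernel `p_t(u,z) = (2πt)^{−ν/2} e^{−|u−z|²/(2t)}`. -/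
noncomputable def heatKernel (ν : ℕ) (t : ℝ) (u z : Fin ν → ℝ) : ℝ :=
  (2 * Real.pi * t) ^ (-(ν : ℝ) / 2) * Real.exp (-(∑ i, (u i - z i) ^ 2) / (2 * t))

/-!
Integration by parts turns the bridge into
`b_t = (t/T) y + ((T - t)/T) x + ∫₀ᵗ (T - t)/(T - s) dB_s`. The Wiener integral is a pathwise limit
of sums of independent Gaussian increments, so it is a centered Gaussian vector whose coordinates
are independent with variance `∫₀ᵗ ((T - t)/(T - s))² ds = t (T - t)/T`. Its translate by the mean
has density `z ↦ p_{t(T-t)/T}((t/T) y + ((T - t)/T) x, z)`, and completing the square in the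
exponents shows that this is the quotient `p_t(x,z) p_{T-t}(z,y) / p_T(x,y)`.
-/

open Filter Topology Set

section RiemannSums

/-- The `k`-th point of the subdivision of `[a, b]` into `n` intervals of equal length; for `n = 0`
it takes the junk value `a`. -/
noncomputable def equipartition (a b : ℝ) (n k : ℕ) : ℝ := a + k * ((b - a) / n)

variable {a b : ℝ}

lemma equipartition_zero (a b : ℝ) (n : ℕ) : equipartition a b n 0 = a := by
  simp [equipartition]

lemma equipartition_self (a b : ℝ) {n : ℕ} (hn : n ≠ 0) : equipartition a b n n = b := by
  rw [equipartition]
  field_simp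
  ring

lemma equipartition_succ_sub (a b : ℝ) (n k : ℕ) :
    equipartition a b n (k + 1) - equipartition a b n k = (b - a) / n := by
  simp only [equipartition]
  push_cast
  ring

lemma monotone_equipartition (hab : a ≤ b) (n : ℕ) : Monotone (equipartition a b n) := by
  have : 0 ≤ b - a := sub_nonneg.2 hab
  intro j k hjk
  unfold equipartition
  gcongr

lemma Icc_equipartition_subset (hab : a ≤ b) {n k : ℕ} (hk : k < n) :
    Icc (equipartition a b n k) (equipartition a b n (k + 1)) ⊆ Icc a b := by
  have hmono := monotone_equipartition hab n
  calc Icc (equipartition a b n k) (equipartition a b n (k + 1))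
      ⊆ Icc (equipartition a b n 0) (equipartition a b n n) :=
        Icc_subset_Icc (hmono k.zero_le) (hmono hk)
    _ = Icc a b := by rw [equipartition_zero, equipartition_self a b (by omega)]

variable {E : Type*} [NormedAddCommGroup E] [NormedSpace ℝ E] [CompleteSpace E]
  {φ : ℝ → ℝ} {h : ℝ → E}

lemma norm_integral_smul_const_sub_integral_smul_le {c : E} {ε : ℝ} (hab : a ≤ b)
    (hφ : IntervalIntegrable φ volume a b)
    (hφh : IntervalIntegrable (fun u => φ u • h u) volume a b)
    (hε : ∀ u ∈ Icc a b, ‖c - h u‖ ≤ ε) :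
    ‖(∫ u in a..b, φ u) • c - ∫ u in a..b, φ u • h u‖ ≤ ∫ u in a..b, |φ u| * ε := by
  have hφc : IntervalIntegrable (fun u => φ u • c) volume a b :=
    ⟨hφ.1.smul_const c, hφ.2.smul_const c⟩
  rw [← intervalIntegral.integral_smul_const, ← intervalIntegral.integral_sub hφc hφh]
  refine intervalIntegral.norm_integral_le_of_norm_le hab (ae_of_all _ fun u hu => ?_)
    (hφ.abs.mul_const ε)
  rw [← smul_sub, norm_smul, Real.norm_eq_abs]
  exact mul_le_mul_of_nonneg_left (hε u (Ioc_subset_Icc_self hu)) (abs_nonneg _)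

lemma norm_sum_integral_smul_sub_integral_smul_le {s τ : ℕ → ℝ} {n : ℕ} {ε : ℝ}
    (hs : Monotone s) (hφ : IntervalIntegrable φ volume (s 0) (s n))
    (hφh : IntervalIntegrable (fun u => φ u • h u) volume (s 0) (s n))
    (hε : ∀ k < n, ∀ u ∈ Icc (s k) (s (k + 1)), ‖h (τ k) - h u‖ ≤ ε) :
    ‖∑ k ∈ Finset.range n, (∫ u in s k..s (k + 1), φ u) • h (τ k) -
      ∫ u in s 0..s n, φ u • h u‖ ≤ (∫ u in s 0..s n, |φ u|) * ε := by
  have hsub : ∀ k < n, uIcc (s k) (s (k + 1)) ⊆ uIcc (s 0) (s n) := fun k hk => by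
    rw [uIcc_of_le (hs k.le_succ), uIcc_of_le (hs n.zero_le)]
    exact Icc_subset_Icc (hs k.zero_le) (hs hk)
  rw [← intervalIntegral.integral_mul_const,
    ← intervalIntegral.sum_integral_adjacent_intervals fun k hk => hφh.mono_set (hsub k hk),
    ← intervalIntegral.sum_integral_adjacent_intervals
      fun k hk => (hφ.abs.mul_const ε).mono_set (hsub k hk),
    ← Finset.sum_sub_distrib]
  refine norm_sum_le_of_le _ fun k hk => ?_
  rw [Finset.mem_range] at hk
  exact norm_integral_smul_const_sub_integral_smul_le (hs k.le_succ)
    (hφ.mono_set (hsub k hk)) (hφh.mono_set (hsub k hk)) (hε k hk)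

lemma eventually_norm_sub_le_equipartition {F : Type*} [SeminormedAddCommGroup F]
    {h : ℝ → F} (hab : a ≤ b) (hh : ContinuousOn h (Icc a b)) {ε : ℝ} (hε : 0 < ε) :
    ∀ᶠ n in atTop, ∀ k < n, ∀ u ∈ Icc (equipartition a b n k) (equipartition a b n (k + 1)),
      ∀ v ∈ Icc (equipartition a b n k) (equipartition a b n (k + 1)), ‖h u - h v‖ ≤ ε := by
  obtain ⟨δ, hδ, hhδ⟩ := Metric.uniformContinuousOn_iff.1
    (isCompact_Icc.uniformContinuousOn_of_continuous hh) ε hε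
  have hmesh : ∀ᶠ n : ℕ in atTop, (b - a) / n < δ :=
    (tendsto_const_div_atTop_nhds_zero_nat (b - a)).eventually_lt_const hδ
  filter_upwards [hmesh] with n hn k hk u hu v hv
  rw [← dist_eq_norm]
  refine (hhδ u (Icc_equipartition_subset hab hk hu) v (Icc_equipartition_subset hab hk hv) ?_).le
  exact (Real.dist_le_of_mem_Icc hu hv).trans_lt (by rwa [equipartition_succ_sub])

lemma tendsto_sum_integral_smul_equipartition (hab : a ≤ b) (hφ : IntervalIntegrable φ volume a b)
    (hh : ContinuousOn h (Icc a b)) {τ : ℕ → ℕ → ℝ}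
    (hτ : ∀ n k, τ n k ∈ Icc (equipartition a b n k) (equipartition a b n (k + 1))) :
    Tendsto
      (fun n => ∑ k ∈ Finset.range n,
        (∫ u in equipartition a b n k..equipartition a b n (k + 1), φ u) • h (τ n k))
      atTop (𝓝 (∫ u in a..b, φ u • h u)) := by
  have hφh : IntervalIntegrable (fun u => φ u • h u) volume a b :=
    hφ.smul_continuousOn (by rwa [uIcc_of_le hab])
  set M := ∫ u in a..b, |φ u|
  have hM : 0 ≤ M := intervalIntegral.integral_nonneg hab fun u _ => abs_nonneg _
  refine Metric.tendsto_nhds.2 fun ε hε => ?_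
  filter_upwards [eventually_norm_sub_le_equipartition hab hh (by positivity : 0 < ε / (M + 1)),
    eventually_ne_atTop 0] with n hosc hn
  have h0 := equipartition_zero a b n
  have h1 := equipartition_self a b hn
  have hdist := norm_sum_integral_smul_sub_integral_smul_le (φ := φ) (h := h) (τ := τ n)
    (monotone_equipartition hab n) (by rwa [h0, h1]) (by rwa [h0, h1])
    fun k hk u hu => hosc k hk (τ n k) (hτ n k) u hu
  rw [h0, h1, ← dist_eq_norm] at hdist
  calc dist _ _ ≤ M * (ε / (M + 1)) := hdist
    _ < ε := by rw [← mul_div_assoc, div_lt_iff₀ (by positivity)]; linarith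

lemma sum_smul_sub_eq_sub_sum {R E : Type*} [Ring R] [AddCommGroup E] [Module R E] (g : ℕ → R)
    (β : ℕ → E) (n : ℕ) :
    ∑ k ∈ Finset.range n, g (k + 1) • (β (k + 1) - β k) =
      g n • β n - g 0 • β 0 - ∑ k ∈ Finset.range n, (g (k + 1) - g k) • β k := by
  rw [← Finset.sum_range_sub (fun k => g k • β k), ← Finset.sum_sub_distrib]
  exact Finset.sum_congr rfl fun k _ => by
    simp only [smul_sub, sub_smul]
    abel

end RiemannSums

section IsotropicGaussian

variable {ι : Type*} [Fintype ι]

/-- The Gaussian law on `ι → ℝ` with mean `m` and covariance matrix `v • 1`. The variance is a real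
number, truncated at `0` by `Real.toNNReal`, so that time differences can be plugged in. -/
noncomputable def isotropicGaussian (m : ι → ℝ) (v : ℝ) : Measure (ι → ℝ) :=
  Measure.pi fun i => gaussianReal (m i) v.toNNReal

instance (m : ι → ℝ) (v : ℝ) : IsProbabilityMeasure (isotropicGaussian m v) := by
  unfold isotropicGaussian
  infer_instance

lemma isotropicGaussian_conv_isotropicGaussian (m₁ m₂ : ι → ℝ) {v₁ v₂ : ℝ} (h₁ : 0 ≤ v₁)
    (h₂ : 0 ≤ v₂) :
    (isotropicGaussian m₁ v₁) ∗ (isotropicGaussian m₂ v₂) =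
      isotropicGaussian (m₁ + m₂) (v₁ + v₂) := by
  classical
  refine Measure.ext_of_charFunDual (funext fun L => ?_)
  simp only [charFunDual_conv, isotropicGaussian, charFunDual_pi, ← Finset.prod_mul_distrib]
  refine Finset.prod_congr rfl fun i _ => ?_
  rw [← charFunDual_conv, gaussianReal_conv_gaussianReal, Real.toNNReal_add h₁ h₂, Pi.add_apply]

lemma isotropicGaussian_map_add_smul (m q : ι → ℝ) (c v : ℝ) :
    (isotropicGaussian m v).map (fun z => q + c • z) =
      isotropicGaussian (q + c • m) (c ^ 2 * v) := by
  have hcoord (i : ι) : (gaussianReal (m i) v.toNNReal).map (fun r => q i + c * r) =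
      gaussianReal (q i + c * m i) (c ^ 2 * v).toNNReal := by
    have hcomp : (fun r => q i + c * r) = (q i + ·) ∘ (c * ·) := rfl
    rw [hcomp, ← Measure.map_map (measurable_const_add (q i)) (measurable_const_mul c),
      gaussianReal_map_const_mul, gaussianReal_map_const_add, add_comm,
      Real.toNNReal_mul (sq_nonneg c), Real.toNNReal_of_nonneg (sq_nonneg c)]
  have hpi := Measure.pi_map_pi (μ := fun i => gaussianReal (m i) v.toNNReal)
    (f := fun i r => q i + c * r) (hμ := fun i => by rw [hcoord]; infer_instance)
    fun i => by fun_prop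
  simp only [hcoord] at hpi
  exact hpi

lemma isotropicGaussian_eq_map_add_sqrt_smul (m : ι → ℝ) (v : ℝ) :
    isotropicGaussian m v = (isotropicGaussian 0 1).map fun z => m + √v • z := by
  have hmax : (max v 0).toNNReal = v.toNNReal := by
    rw [← Real.coe_toNNReal', Real.toNNReal_coe]
  rw [isotropicGaussian_map_add_smul, smul_zero, add_zero, mul_one, Real.sq_sqrt']
  simp only [isotropicGaussian, hmax]

lemma isotropicGaussian_zero_var (m : ι → ℝ) : isotropicGaussian m 0 = Measure.dirac m := by
  simp only [isotropicGaussian_eq_map_add_sqrt_smul m, Real.sqrt_zero, zero_smul, add_zero,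
    Measure.map_const, measure_univ, one_smul]

variable {Ω : Type*} {mΩ : MeasurableSpace Ω} {P : Measure Ω} [IsProbabilityMeasure P]

lemma hasLaw_isotropicGaussian_of_tendsto {X : Ω → ι → ℝ} {Y : ℕ → Ω → ι → ℝ} {m : ℕ → ι → ℝ}
    {v : ℕ → ℝ} {m₀ : ι → ℝ} {v₀ : ℝ}
    (hY : ∀ n, HasLaw (Y n) (isotropicGaussian (m n) (v n)) P) (hX : AEMeasurable X P)
    (hYX : ∀ᵐ ω ∂P, Tendsto (Y · ω) atTop (𝓝 (X ω))) (hm : Tendsto m atTop (𝓝 m₀))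
    (hv : Tendsto v atTop (𝓝 v₀)) :
    HasLaw X (isotropicGaussian m₀ v₀) P := by
  refine ⟨hX, ?_⟩
  have hX_lim := tendstoInDistribution_of_ae_tendsto (fun n => (hY n).aemeasurable) hX hYX
  have hgauss_lim := tendstoInDistribution_of_ae_tendsto (μ' := isotropicGaussian (0 : ι → ℝ) 1)
    (X := fun n z => m n + √(v n) • z) (Z := fun z => m₀ + √v₀ • z) (l := atTop)
    (fun n => by fun_prop) (by fun_prop) (ae_of_all _ fun z =>
      hm.add (((Real.continuous_sqrt.tendsto v₀).comp hv).smul_const z))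
  have hY_lim : TendstoInDistribution Y atTop (fun z : ι → ℝ => m₀ + √v₀ • z) (fun _ => P)
      (isotropicGaussian 0 1) := by
    refine ⟨fun n => (hY n).aemeasurable, by fun_prop,
      hgauss_lim.tendsto.congr fun n => Subtype.ext ?_⟩
    exact (isotropicGaussian_eq_map_add_sqrt_smul (m n) (v n)).symm.trans (hY n).map_eq.symm
  rw [isotropicGaussian_eq_map_add_sqrt_smul]
  exact tendstoInDistribution_unique _ hX_lim hY_lim

end IsotropicGaussian

lemma pi_withDensity_ofReal {ι : Type*} [Fintype ι] {X : ι → Type*}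
    [∀ i, MeasurableSpace (X i)] (μ : ∀ i, Measure (X i)) [∀ i, SigmaFinite (μ i)]
    {p : ∀ i, X i → ℝ} (hp : ∀ i z, 0 ≤ p i z) (hpi : ∀ i, Integrable (p i) (μ i)) :
    Measure.pi (fun i => (μ i).withDensity fun z => ENNReal.ofReal (p i z)) =
      (Measure.pi μ).withDensity fun z => ENNReal.ofReal (∏ i, p i (z i)) := by
  have (i : ι) : IsFiniteMeasure ((μ i).withDensity fun z => ENNReal.ofReal (p i z)) :=
    isFiniteMeasure_withDensity_ofReal (hpi i).2
  refine Measure.pi_eq fun s hs => ?_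
  rw [withDensity_apply _ (MeasurableSet.univ_pi hs), Measure.restrict_pi_pi,
    ← ofReal_integral_eq_lintegral_ofReal
      (Integrable.fintype_prod_dep fun i => (hpi i).restrict)
      (ae_of_all _ fun z => Finset.prod_nonneg fun i _ => hp i (z i)),
    integral_fintype_prod_eq_prod,
    ENNReal.ofReal_prod_of_nonneg fun i _ => integral_nonneg (hp i)]
  refine Finset.prod_congr rfl fun i _ => ?_
  rw [withDensity_apply _ (hs i),
    ofReal_integral_eq_lintegral_ofReal (hpi i).restrict (ae_of_all _ (hp i))]

section HeatKernel

variable {ν : ℕ} {s t : ℝ}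

lemma measurable_heatKernel (ν : ℕ) (t : ℝ) (u : Fin ν → ℝ) :
    Measurable (heatKernel ν t u) := by
  unfold heatKernel
  fun_prop

lemma heatKernel_pos (ht : 0 < t) (u z : Fin ν → ℝ) : 0 < heatKernel ν t u z := by
  unfold heatKernel
  positivity

lemma heatKernel_eq_prod_gaussianPDFReal (ht : 0 < t) (u z : Fin ν → ℝ) :
    heatKernel ν t u z = ∏ i, gaussianPDFReal (u i) t.toNNReal (z i) := by
  have hconst : (2 * Real.pi * t) ^ (-(ν : ℝ) / 2) = (√(2 * Real.pi * t))⁻¹ ^ ν := by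
    rw [Real.sqrt_eq_rpow, ← Real.rpow_neg (by positivity), ← Real.rpow_natCast,
      ← Real.rpow_mul (by positivity)]
    congr 1
    ring
  simp only [gaussianPDFReal, heatKernel, Finset.prod_mul_distrib, Finset.prod_const,
    Finset.card_univ, Fintype.card_fin, Real.coe_toNNReal _ ht.le, hconst, ← Real.exp_sum,
    Finset.sum_div, ← Finset.sum_neg_distrib, sub_sq_comm (u _)]

lemma isotropicGaussian_eq_withDensity_heatKernel (ht : 0 < t) (u : Fin ν → ℝ) :
    isotropicGaussian u t = volume.withDensity fun z => ENNReal.ofReal (heatKernel ν t u z) := by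
  simp only [heatKernel_eq_prod_gaussianPDFReal ht, volume_pi]
  rw [← pi_withDensity_ofReal (p := fun i => gaussianPDFReal (u i) t.toNNReal) _
    (fun i => gaussianPDFReal_nonneg _ _) fun i => integrable_gaussianPDFReal _ _,
    isotropicGaussian]
  simp only [gaussianReal_of_var_ne_zero _ (Real.toNNReal_pos.2 ht).ne']
  rfl

lemma sq_sub_div_add_sq_sub_div (hs : 0 < s) (ht : 0 < t) (x y z : ℝ) :
    (x - z) ^ 2 / (2 * s) + (z - y) ^ 2 / (2 * t) =
      (x - y) ^ 2 / (2 * (s + t)) +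
        (t / (s + t) * x + s / (s + t) * y - z) ^ 2 / (2 * (s * t / (s + t))) := by
  field_simp
  ring

lemma heatKernel_mul_heatKernel (hs : 0 < s) (ht : 0 < t) (x y z : Fin ν → ℝ) :
    heatKernel ν s x z * heatKernel ν t z y =
      heatKernel ν (s + t) x y *
        heatKernel ν (s * t / (s + t)) ((t / (s + t)) • x + (s / (s + t)) • y) z := by
  have hconst : (2 * Real.pi * s) * (2 * Real.pi * t) =
      (2 * Real.pi * (s + t)) * (2 * Real.pi * (s * t / (s + t))) := by
    field_simp
  have hexp : -(∑ i, (x i - z i) ^ 2) / (2 * s) + -(∑ i, (z i - y i) ^ 2) / (2 * t) =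
      -(∑ i, (x i - y i) ^ 2) / (2 * (s + t)) +
        -(∑ i, (((t / (s + t)) • x + (s / (s + t)) • y) i - z i) ^ 2) /
          (2 * (s * t / (s + t))) := by
    simp only [neg_div, ← neg_add, Finset.sum_div, ← Finset.sum_add_distrib, Pi.add_apply,
      Pi.smul_apply, smul_eq_mul, sq_sub_div_add_sq_sub_div hs ht]
  simp only [heatKernel]
  rw [mul_mul_mul_comm, ← Real.exp_add, hexp, ← Real.mul_rpow (by positivity) (by positivity),
    hconst, Real.mul_rpow (by positivity) (by positivity), Real.exp_add, mul_mul_mul_comm]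

lemma heatKernel_mul_heatKernel_div {T : ℝ} (ht : t ∈ Ioo 0 T) (x y z : Fin ν → ℝ) :
    heatKernel ν t x z * heatKernel ν (T - t) z y / heatKernel ν T x y =
      heatKernel ν (t * (T - t) / T) ((t / T) • y + ((T - t) / T) • x) z := by
  have hT : 0 < T := ht.1.trans ht.2
  rw [heatKernel_mul_heatKernel ht.1 (sub_pos.2 ht.2), add_sub_cancel,
    mul_div_cancel_left₀ _ (heatKernel_pos hT x y).ne', add_comm]

end HeatKernel

section WienerIntegral

/-- The Wiener integral `∫₀ᵗ g dβ` of a deterministic function `g` along a path `β` with `β 0 = 0`,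
defined pathwise through integration by parts; this is meaningful for `g` absolutely continuous on
`[0, t]`. -/
noncomputable def wienerIntegral {E : Type*} [NormedAddCommGroup E] [NormedSpace ℝ E] (g : ℝ → ℝ)
    (t : ℝ) (β : ℝ → E) : E :=
  g t • β t - ∫ s in 0..t, deriv g s • β s

lemma tendsto_sum_smul_sub_wienerIntegral {E : Type*} [NormedAddCommGroup E] [NormedSpace ℝ E]
    [CompleteSpace E] {g : ℝ → ℝ} {t : ℝ} {β : ℝ → E} (ht : 0 ≤ t)
    (hg : AbsolutelyContinuousOnInterval g 0 t) (hβ : ContinuousOn β (Icc 0 t)) (hβ0 : β 0 = 0) :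
    Tendsto
      (fun n => ∑ k ∈ Finset.range n, g (equipartition 0 t n (k + 1)) •
        (β (equipartition 0 t n (k + 1)) - β (equipartition 0 t n k)))
      atTop (𝓝 (wienerIntegral g t β)) := by
  have hlim := (tendsto_sum_integral_smul_equipartition ht hg.intervalIntegrable_deriv hβ
    fun n k => left_mem_Icc.2 (monotone_equipartition ht n k.le_succ)).const_sub (g t • β t)
  refine hlim.congr' ?_
  filter_upwards [eventually_ne_atTop 0] with n hn
  rw [sum_smul_sub_eq_sub_sum (fun k => g (equipartition 0 t n k))
    (fun k => β (equipartition 0 t n k)), equipartition_zero, equipartition_self 0 t hn, hβ0,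
    smul_zero, sub_zero]
  congr 1
  refine Finset.sum_congr rfl fun k hk => ?_
  have hsub : Icc (equipartition 0 t n k) (equipartition 0 t n (k + 1)) ⊆ Icc 0 t :=
    Icc_equipartition_subset ht (Finset.mem_range.1 hk)
  have hle := monotone_equipartition ht n k.le_succ
  rw [(hg.mono (by rwa [uIcc_of_le hle, uIcc_of_le ht])).integral_deriv_eq_sub]

end WienerIntegral

namespace IsBrownianMotion

variable {Ω : Type*} {mΩ : MeasurableSpace Ω} {P : Measure Ω} {ν : ℕ} {F : Filtration ℝ mΩ}
  {B : ℝ → Ω → Fin ν → ℝ}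

lemma hasLaw_smul_sub (hB : IsBrownianMotion P ν F B) {s t : ℝ} (hs : 0 ≤ s) (hst : s ≤ t)
    (c : ℝ) :
    HasLaw (fun ω => c • (B t ω - B s ω)) (isotropicGaussian 0 (c ^ 2 * (t - s))) P := by
  have hincr : HasLaw (fun ω => B t ω - B s ω) (isotropicGaussian 0 (t - s)) P :=
    ⟨(((hB.adapted t).mono (F.le t) le_rfl).sub
      ((hB.adapted s).mono (F.le s) le_rfl)).aemeasurable, hB.gaussIncr s t hs hst⟩
  have hmap : HasLaw (fun z : Fin ν → ℝ => c • z) (isotropicGaussian 0 (c ^ 2 * (t - s)))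
      (isotropicGaussian 0 (t - s)) :=
    ⟨by fun_prop, by simpa using isotropicGaussian_map_add_smul 0 (0 : Fin ν → ℝ) c (t - s)⟩
  exact hmap.fun_comp hincr

variable {s : ℕ → ℝ}

lemma measurable_sum_smul_sub (hB : IsBrownianMotion P ν F B) (hs : Monotone s) (c : ℕ → ℝ)
    (n : ℕ) :
    Measurable[F (s n)]
      fun ω => ∑ k ∈ Finset.range n, c k • (B (s (k + 1)) ω - B (s k) ω) := by
  refine Finset.measurable_fun_sum _ fun k hk => ?_
  have hB_le (j : ℕ) (hj : j ≤ n) : Measurable[F (s n)] (B (s j)) :=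
    (hB.adapted (s j)).mono (F.mono (hs hj)) le_rfl
  rw [Finset.mem_range] at hk
  exact ((hB_le _ hk).sub (hB_le _ hk.le)).const_smul (c k)

lemma indepFun_sum_smul_sub_smul_sub (hB : IsBrownianMotion P ν F B) (hs : Monotone s)
    (h0 : 0 ≤ s 0) (c : ℕ → ℝ) (n : ℕ) :
    IndepFun (fun ω => ∑ k ∈ Finset.range n, c k • (B (s (k + 1)) ω - B (s k) ω))
      (fun ω => c n • (B (s (n + 1)) ω - B (s n) ω)) P := by
  have hindep : IndepFun (fun ω => B (s (n + 1)) ω - B (s n) ω)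
      (fun ω => ∑ k ∈ Finset.range n, c k • (B (s (k + 1)) ω - B (s k) ω)) P :=
    (IndepFun_iff_Indep _ _ _).2 <| indep_of_indep_of_le_right
      (hB.indepIncr _ _ (h0.trans (hs n.zero_le)) (hs n.le_succ))
      (hB.measurable_sum_smul_sub hs c n).comap_le
  exact hindep.symm.comp measurable_id (measurable_const_smul (c n))

lemma hasLaw_sum_smul_sub [IsProbabilityMeasure P] (hB : IsBrownianMotion P ν F B)
    (hs : Monotone s) (h0 : 0 ≤ s 0) (c : ℕ → ℝ) (n : ℕ) :
    HasLaw (fun ω => ∑ k ∈ Finset.range n, c k • (B (s (k + 1)) ω - B (s k) ω))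
      (isotropicGaussian 0 (∑ k ∈ Finset.range n, c k ^ 2 * (s (k + 1) - s k))) P := by
  have hvar (k : ℕ) : 0 ≤ c k ^ 2 * (s (k + 1) - s k) :=
    mul_nonneg (sq_nonneg _) (sub_nonneg.2 (hs k.le_succ))
  induction n with
  | zero =>
    simp only [Finset.range_zero, Finset.sum_empty, isotropicGaussian_zero_var]
    exact hasLaw_dirac_of_ae_eq .rfl
  | succ n ih =>
    have hincr := hB.hasLaw_smul_sub (h0.trans (hs n.zero_le)) (hs n.le_succ) (c n)
    have hsum := (hB.indepFun_sum_smul_sub_smul_sub hs h0 c n).hasLaw_fun_add ih hincr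
    rw [isotropicGaussian_conv_isotropicGaussian _ _ (Finset.sum_nonneg fun k _ => hvar k)
      (hvar n), add_zero] at hsum
    simpa only [Finset.sum_range_succ] using hsum

lemma hasLaw_wienerIntegral [IsProbabilityMeasure P] (hB : IsBrownianMotion P ν F B) {g : ℝ → ℝ}
    {t : ℝ} (ht : 0 ≤ t) (hg : AbsolutelyContinuousOnInterval g 0 t) :
    HasLaw (fun ω => wienerIntegral g t (B · ω))
      (isotropicGaussian 0 (∫ s in 0..t, g s ^ 2)) P := by
  have hmono := monotone_equipartition ht
  have hsum_law (n : ℕ) := hB.hasLaw_sum_smul_sub (hmono n) (equipartition_zero 0 t n).ge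
    (fun k => g (equipartition 0 t n (k + 1))) n
  have hsum_lim (ω : Ω) := tendsto_sum_smul_sub_wienerIntegral ht hg
    ((hB.contPaths ω).mono Icc_subset_Ici_self) (hB.start ω)
  have hvar_lim := tendsto_sum_integral_smul_equipartition (φ := 1) (h := fun s => g s ^ 2) ht
    intervalIntegrable_const ((uIcc_of_le ht ▸ hg.continuousOn).pow 2)
    fun n k => right_mem_Icc.2 (hmono n k.le_succ)
  simp only [Pi.one_apply, intervalIntegral.integral_const, smul_eq_mul, one_mul,
    mul_comm (_ - _)] at hvar_lim
  exact hasLaw_isotropicGaussian_of_tendsto hsum_law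
    (aemeasurable_of_tendsto_metrizable_ae' (fun n => (hsum_law n).aemeasurable)
      (ae_of_all _ hsum_lim)) (ae_of_all _ hsum_lim) tendsto_const_nhds hvar_lim

end IsBrownianMotion

section BrownianBridge

lemma hasDerivAt_div_const_sub {𝕜 : Type*} [NontriviallyNormedField 𝕜] (c : 𝕜) {T s : 𝕜}
    (hs : s ≠ T) :
    HasDerivAt (fun s => c / (T - s)) (c * ((T - s) ^ 2)⁻¹) s := by
  have hne : T - s ≠ 0 := sub_ne_zero.2 hs.symm
  simpa [div_eq_mul_inv] using (((hasDerivAt_id s).const_sub T).inv hne).const_mul c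

variable {ν : ℕ} {T t : ℝ}

lemma absolutelyContinuousOnInterval_div_const_sub (ht : 0 ≤ t) (htT : t < T) :
    AbsolutelyContinuousOnInterval (fun s => (T - t) / (T - s)) 0 t := by
  refine ContDiffOn.absolutelyContinuousOnInterval ?_
  rw [uIcc_of_le ht]
  exact contDiffOn_const.div (by fun_prop) fun s hs => (sub_pos.2 (hs.2.trans_lt htT)).ne'

lemma integral_sq_div_const_sub (ht : 0 ≤ t) (htT : t < T) :
    ∫ s in 0..t, ((T - t) / (T - s)) ^ 2 = t * (T - t) / T := by
  have hne {s : ℝ} (hs : s ∈ uIcc 0 t) : s ≠ T := by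
    rw [uIcc_of_le ht] at hs
    exact (hs.2.trans_lt htT).ne
  have hT : T ≠ 0 := (ht.trans_lt htT).ne'
  have htT' : T - t ≠ 0 := (sub_pos.2 htT).ne'
  have hderiv (s : ℝ) (hs : s ∈ uIcc 0 t) :
      HasDerivAt (fun s => (T - t) ^ 2 / (T - s)) (((T - t) / (T - s)) ^ 2) s := by
    rw [div_pow, div_eq_mul_inv]
    exact hasDerivAt_div_const_sub ((T - t) ^ 2) (hne hs)
  have hint : IntervalIntegrable (fun s => ((T - t) / (T - s)) ^ 2) volume 0 t :=
    ((absolutelyContinuousOnInterval_div_const_sub ht htT).continuousOn.pow 2).intervalIntegrable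
  rw [intervalIntegral.integral_eq_sub_of_hasDerivAt hderiv hint]
  field_simp
  ring

lemma bridgeBB_eq_add_wienerIntegral (ht : 0 ≤ t) (htT : t < T) (x y : Fin ν → ℝ)
    (β : ℝ → Fin ν → ℝ) :
    bridgeBB ν T x y β t =
      (t / T) • y + ((T - t) / T) • x + wienerIntegral (fun s => (T - t) / (T - s)) t β := by
  have hintegral : ∫ s in 0..t, deriv (fun s => (T - t) / (T - s)) s • β s =
      (T - t) • ∫ s in 0..t, ((T - s) ^ 2)⁻¹ • β s := by
    rw [← intervalIntegral.integral_smul]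
    refine intervalIntegral.integral_congr fun s hs => ?_
    rw [uIcc_of_le ht] at hs
    simp only [(hasDerivAt_div_const_sub (T - t) (hs.2.trans_lt htT).ne).deriv, smul_smul]
  rw [bridgeBB, if_pos htT, wienerIntegral, hintegral, div_self (sub_pos.2 htT).ne', one_smul,
    add_sub_assoc]

variable {Ω : Type*} {mΩ : MeasurableSpace Ω} {P : Measure Ω} {F : Filtration ℝ mΩ}
  {B : ℝ → Ω → Fin ν → ℝ}

lemma IsBrownianMotion.hasLaw_bridgeBB [IsProbabilityMeasure P] (hB : IsBrownianMotion P ν F B)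
    (ht : 0 ≤ t) (htT : t < T) (x y : Fin ν → ℝ) :
    HasLaw (fun ω => bridgeBB ν T x y (B · ω) t)
      (isotropicGaussian ((t / T) • y + ((T - t) / T) • x) (t * (T - t) / T)) P := by
  have hwiener := hB.hasLaw_wienerIntegral ht (absolutelyContinuousOnInterval_div_const_sub ht htT)
  rw [integral_sq_div_const_sub ht htT] at hwiener
  set m := (t / T) • y + ((T - t) / T) • x
  have htranslate : HasLaw (fun z => m + z) (isotropicGaussian m (t * (T - t) / T))
      (isotropicGaussian 0 (t * (T - t) / T)) :=
    ⟨by fun_prop, by simpa using isotropicGaussian_map_add_smul 0 m 1 (t * (T - t) / T)⟩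
  simpa only [bridgeBB_eq_add_wienerIntegral ht htT] using htranslate.fun_comp hwiener

end BrownianBridge

theorem statement11_general {E : Type*} [NormedAddCommGroup E] [NormedSpace ℝ E]
    [CompleteSpace E] {Ω : Type*} [m : MeasurableSpace Ω] (P : Measure Ω)
    [IsProbabilityMeasure P] (ν : ℕ) (F : Filtration ℝ m)
    (B : ℝ → Ω → Fin ν → ℝ) (hB : IsBrownianMotion P ν F B) (T : ℝ)
    (x y : Fin ν → ℝ) (t : ℝ) (ht : t ∈ Set.Ioo 0 T) :
    (∀ f : (Fin ν → ℝ) → E,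
      Integrable f (Measure.map (fun ω => bridgeBB ν T x y (fun s => B s ω) t) P) →
      ∫ ω, f (bridgeBB ν T x y (fun s => B s ω) t) ∂P =
        ∫ z : Fin ν → ℝ,
          (heatKernel ν t x z * heatKernel ν (T - t) z y / heatKernel ν T x y) • f z) ∧
    Measure.map (fun ω => bridgeBB ν T x y (fun s => B s ω) t) P =
      (volume : Measure (Fin ν → ℝ)).withDensity fun z =>
        ENNReal.ofReal (heatKernel ν t x z * heatKernel ν (T - t) z y / heatKernel ν T x y) := by
  have hvar : 0 < t * (T - t) / T :=
    div_pos (mul_pos ht.1 (sub_pos.2 ht.2)) (ht.1.trans ht.2)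
  have hlaw := hB.hasLaw_bridgeBB ht.1.le ht.2 x y
  rw [isotropicGaussian_eq_withDensity_heatKernel hvar] at hlaw
  simp only [heatKernel_mul_heatKernel_div ht]
  refine ⟨fun f hf => ?_, hlaw.map_eq⟩
  rw [← integral_map hlaw.aemeasurable hf.aestronglyMeasurable, hlaw.map_eq,
    integral_withDensity_eq_integral_toReal_smul (measurable_heatKernel ν _ _).ennreal_ofReal
      (ae_of_all _ fun z => ENNReal.ofReal_lt_top)]
  simp only [ENNReal.toReal_ofReal (heatKernel_pos hvar _ _).le]

/-- For `t ∈ (0,T)` and bounded Borel `f`,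
`E[f(b_t)] = ∫ p_t(x,z) p_{T−t}(z,y) f(z) dz / p_T(x,y)`; in particular the law of `b_t` is
absolutely continuous w.r.t. Lebesgue measure with density
`z ↦ p_t(x,z) p_{T−t}(z,y)/p_T(x,y)`. -/
theorem statement11 {Ω : Type*} [m : MeasurableSpace Ω] (P : Measure Ω)
    [IsProbabilityMeasure P] (ν : ℕ) (hν : 0 < ν) (F : Filtration ℝ m)
    (B : ℝ → Ω → Fin ν → ℝ) (hB : IsBrownianMotion P ν F B) (T : ℝ) (hT : 0 < T)
    (x y : Fin ν → ℝ) (t : ℝ) (ht : t ∈ Set.Ioo 0 T) :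
    (∀ f : (Fin ν → ℝ) → ℝ, Measurable f → (∃ C, ∀ z, |f z| ≤ C) →
      ∫ ω, f (bridgeBB ν T x y (fun s => B s ω) t) ∂P =
        ∫ z : Fin ν → ℝ,
          heatKernel ν t x z * heatKernel ν (T - t) z y / heatKernel ν T x y * f z) ∧
    Measure.map (fun ω => bridgeBB ν T x y (fun s => B s ω) t) P =
      (volume : Measure (Fin ν → ℝ)).withDensity fun z =>
        ENNReal.ofReal (heatKernel ν t x z * heatKernel ν (T - t) z y / heatKernel ν T x y) := by
  have h := statement11_general P ν F B hB T x y t ht (E := ℝ)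
  exact ⟨fun f hf ⟨C, hC⟩ => h.1 f (.of_bound hf.aestronglyMeasurable C (ae_of_all _ hC)), h.2⟩
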